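/- arXiv:1902.05603 — 2 statements merged into one kernel-verified Lean document; each statement's English description precedes it below -/
import Mathlib

section
/- Let n ≥ 3 and ℓ ≥ 1. The principal congruence subgroup Γ_n(ℓ), i.e. the kernel of the reduction map SL_n(ℤ) → SL_n(ℤ/ℓℤ), is the smallest normal subgroup of SL_n(ℤ) containing the ℓ-th power E^ℓ of the elementary matrix E = E_{1,2} (identity plus a 1 in position (1,2)). -/
/-!
Let `N` be the normal closure of `E ^ ℓ`. All elementary matrices with parameter divisible by `ℓ`
lie in `N`, since they arise from `E ^ ℓ` by taking commutators, and a Euclidean descent on the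
off-diagonal entries of one row, followed by a stable range argument, moves every element of
`Γ(ℓ)` into a `2 × 2` block modulo `N`. Modulo `N` such a block commutes with all elementary
matrices of `SL₃`, so that its class depends only on its first row: this is the Mennicke symbol
`[a, b]`, which depends on `a` modulo `b` and is multiplicative in `b`. Here `b = ℓ b'`, and `b'`
may be changed modulo `a`. If `a` is replaced by `-p` with `p` prime, Fermat and Euler give
`[a, b] ^ (p - 1) = 1` and `[a, b] ^ (p / 2) = 1`; Dirichlet's theorem provides primes
`p ≡ 3 [MOD 4]` and `p'` for which `p / 2`, which is odd, and `p' - 1` are coprime, so the symbol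
is trivial.
-/

open Matrix

/-- The elementary matrix `E = E_{1,2}` (identity plus a `1` in position `(1,2)`)
as an element of `SL_{n+3}(R)`. -/
def Emat (n : ℕ) (R : Type*) [CommRing R] :
    Matrix.SpecialLinearGroup (Fin (n + 3)) R :=
  ⟨Matrix.transvection 0 1 1, by exact Matrix.det_transvection_of_ne 0 1 zero_ne_one 1⟩

open Matrix.SpecialLinearGroup (coe_mul coe_one transvection_coe transvection_inv transvection_add)
open scoped commutatorElement

local notation "SL" => Matrix.SpecialLinearGroup
local notation "T" => Matrix.SpecialLinearGroup.transvection

section Subgroups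

variable {ι R : Type*} [Fintype ι] [DecidableEq ι] [CommRing R]

/-- The principal congruence subgroup `Γ(I)` of `SL ι R`: the matrices congruent to `1` modulo the
ideal `I`. -/
def principalCongruenceSubgroup (ι : Type*) {R : Type*} [Fintype ι] [DecidableEq ι] [CommRing R]
    (I : Ideal R) : Subgroup (SL ι R) :=
  (Matrix.SpecialLinearGroup.map (Ideal.Quotient.mk I)).ker

/-- The elementary subgroup `E(I)` of `SL ι R`, generated by the transvections with parameter in the
ideal `I`. No normal closure is taken. -/
def elementarySubgroup (ι : Type*) {R : Type*} [Fintype ι] [DecidableEq ι] [CommRing R]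
    (I : Ideal R) : Subgroup (SL ι R) :=
  Subgroup.closure {g | ∃ (i j : ι) (hij : i ≠ j), ∃ c ∈ I, T hij c = g}

/-- The subgroup of `SL ι R` of the matrices which agree with `1` outside the block `S × S`, encoded
as those fixing, on the left and on the right, the standard basis vectors outside `S`. -/
def supportedSubgroup (R : Type*) [CommRing R] (S : Finset ι) :
    Subgroup (SL ι R) where
  carrier := {g | ∀ s ∉ S, Pi.single s 1 ᵥ* g.1 = Pi.single s 1 ∧
    g.1 *ᵥ Pi.single s 1 = Pi.single s 1}
  one_mem' s _ := ⟨vecMul_one _, one_mulVec _⟩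
  mul_mem' {g h} hg hh s hs := by
    change _ ᵥ* (g.1 * h.1) = _ ∧ (g.1 * h.1) *ᵥ _ = _
    rw [← vecMul_vecMul, (hg s hs).1, (hh s hs).1, ← mulVec_mulVec, (hh s hs).2, (hg s hs).2]
    exact ⟨rfl, rfl⟩
  inv_mem' {g} hg s hs := by
    have h₁ : g.1 * (g⁻¹).1 = 1 := congrArg Subtype.val (mul_inv_cancel g)
    have h₂ : (g⁻¹).1 * g.1 = 1 := congrArg Subtype.val (inv_mul_cancel g)
    constructor
    · nth_rw 1 [← (hg s hs).1]
      rw [vecMul_vecMul, h₁, vecMul_one]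
    · nth_rw 1 [← (hg s hs).2]
      rw [mulVec_mulVec, h₂, one_mulVec]

variable {I : Ideal R} {S : Finset ι} {g : SL ι R} {i j : ι}

instance (I : Ideal R) : (principalCongruenceSubgroup ι I).Normal :=
  MonoidHom.normal_ker _

theorem mem_ker_specialLinearGroup_map {S : Type*} [CommRing S] {f : R →+* S} {g : SL ι R} :
    g ∈ (Matrix.SpecialLinearGroup.map (n := ι) f).ker ↔
      ∀ i j, g i j - (1 : Matrix ι ι R) i j ∈ RingHom.ker f := by
  rw [MonoidHom.mem_ker, Matrix.SpecialLinearGroup.ext_iff]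
  refine forall₂_congr fun i j ↦ ?_
  rw [RingHom.sub_mem_ker_iff]
  obtain rfl | hij := eq_or_ne i j <;> simp [*]

theorem mem_principalCongruenceSubgroup :
    g ∈ principalCongruenceSubgroup ι I ↔ ∀ i j, g i j - (1 : Matrix ι ι R) i j ∈ I := by
  simp_rw [principalCongruenceSubgroup, mem_ker_specialLinearGroup_map, Ideal.mk_ker]

theorem ker_map_eq_principalCongruenceSubgroup {S : Type*} [CommRing S] (f : R →+* S) :
    (Matrix.SpecialLinearGroup.map (n := ι) f).ker =
      principalCongruenceSubgroup ι (RingHom.ker f) := by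
  ext; rw [mem_ker_specialLinearGroup_map, mem_principalCongruenceSubgroup]

theorem mem_supportedSubgroup :
    g ∈ supportedSubgroup R S ↔ ∀ i j, i ∉ S ∨ j ∉ S → g i j = (1 : Matrix ι ι R) i j := by
  change (∀ s ∉ S, _) ↔ _
  simp only [single_one_vecMul, mulVec_single_one, funext_iff, row_apply, col_apply]
  refine ⟨?_, ?_⟩
  · rintro h i j (hi | hj)
    · simpa [one_apply, Pi.single_apply, eq_comm] using (h i hi).1 j
    · simpa [one_apply, Pi.single_apply] using (h j hj).2 i
  · intro h s hs
    refine ⟨fun j => ?_, fun j => ?_⟩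
    · simpa [one_apply, Pi.single_apply, eq_comm] using h s j (.inl hs)
    · simpa [one_apply, Pi.single_apply] using h j s (.inr hs)

theorem supportedSubgroup_univ : supportedSubgroup R (Finset.univ : Finset ι) = ⊤ := by
  ext; simp [mem_supportedSubgroup]

theorem transvection_mul_coe_apply (hij : i ≠ j) (c : R) (a b : ι) :
    (T hij c * g) a b = g a b + if a = i then c * g j b else 0 := by
  rw [coe_mul, transvection_coe, add_mul, one_mul]
  obtain rfl | ha := eq_or_ne a i <;> simp [*]

theorem mul_transvection_coe_apply (hij : i ≠ j) (c : R) (a b : ι) :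
    (g * T hij c) a b = g a b + if b = j then g a i * c else 0 := by
  rw [coe_mul, transvection_coe, mul_add, mul_one]
  obtain rfl | hb := eq_or_ne b j <;> simp [*]

theorem transvection_coe_apply_sub_one (hij : i ≠ j) (c : R) (a b : ι) :
    T hij c a b - (1 : Matrix ι ι R) a b = if a = i ∧ b = j then c else 0 := by
  simp [transvection_coe, single_apply, eq_comm]

theorem transvection_mem_principalCongruenceSubgroup (hij : i ≠ j) {c : R} (hc : c ∈ I) :
    T hij c ∈ principalCongruenceSubgroup ι I := by
  refine mem_principalCongruenceSubgroup.2 fun a b ↦ ?_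
  rw [transvection_coe_apply_sub_one]
  split_ifs
  exacts [hc, I.zero_mem]

theorem transvection_mem_supportedSubgroup (hij : i ≠ j) (hi : i ∈ S) (hj : j ∈ S) (c : R) :
    T hij c ∈ supportedSubgroup R S := by
  refine mem_supportedSubgroup.2 fun a b hab ↦ ?_
  rw [← sub_eq_zero, transvection_coe_apply_sub_one, if_neg]
  rintro ⟨rfl, rfl⟩
  exact hab.elim (· hi) (· hj)

theorem transvection_mem_elementarySubgroup (hij : i ≠ j) {c : R} (hc : c ∈ I) :
    T hij c ∈ elementarySubgroup ι I :=
  Subgroup.subset_closure ⟨i, j, hij, c, hc, rfl⟩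

theorem transvection_pow (hij : i ≠ j) (c : R) (m : ℕ) : T hij c ^ m = T hij (m * c) := by
  induction m with
  | zero => simp
  | succ m ih => rw [pow_succ, ih, ← transvection_add]; congr; push_cast; ring

end Subgroups

section Normal

variable {ι R : Type*} [Fintype ι] [DecidableEq ι] [CommRing R] {i j : ι}

theorem commutator_transvection {k : ι} (hij : i ≠ j) (hjk : j ≠ k) (hik : i ≠ k) (x y : R) :
    ⁅T hij x, T hjk y⁆ = T hik (x * y) := by
  rw [commutatorElement_def, mul_inv_eq_iff_eq_mul, mul_inv_eq_iff_eq_mul]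
  apply Subtype.ext
  simp [transvection_coe, mul_add, add_mul, hik.symm, hjk.symm]
  abel

variable {N : Subgroup (SL ι R)} [N.Normal]

theorem transvection_mul_mem_of_right_ne {k : ι} {x : R} {hij : i ≠ j} (hx : T hij x ∈ N)
    (hjk : j ≠ k) (hik : i ≠ k) (y : R) : T hik (x * y) ∈ N := by
  rw [← commutator_transvection hij hjk]
  exact Subgroup.commutator_le_left N ⊤
    (Subgroup.commutator_mem_commutator hx (Subgroup.mem_top _))

theorem transvection_mul_mem_of_left_ne {k : ι} {x : R} {hij : i ≠ j} (hx : T hij x ∈ N)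
    (hki : k ≠ i) (hkj : k ≠ j) (y : R) : T hkj (y * x) ∈ N := by
  rw [← commutator_transvection hki hij]
  exact Subgroup.commutator_le_right ⊤ N
    (Subgroup.commutator_mem_commutator (Subgroup.mem_top _) hx)

theorem elementarySubgroup_span_singleton_le (hι : 3 ≤ Fintype.card ι) {x : R} {hij : i ≠ j}
    (hx : T hij x ∈ N) : elementarySubgroup ι (Ideal.span {x}) ≤ N := by
  have hι' : 3 ≤ ENat.card ι := by rw [ENat.card_eq_coe_fintype_card]; exact_mod_cast hι
  have row {a b c : ι} (hab : a ≠ b) (hac : a ≠ c) (h : T hab x ∈ N) : T hac x ∈ N := by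
    obtain rfl | hbc := eq_or_ne b c
    · exact h
    · simpa using transvection_mul_mem_of_right_ne h hbc hac 1
  have col {a b c : ι} (hac : a ≠ c) (hbc : b ≠ c) (h : T hac x ∈ N) : T hbc x ∈ N := by
    obtain rfl | hba := eq_or_ne b a
    · exact h
    · simpa using transvection_mul_mem_of_left_ne h hba hbc 1
  have all {a b : ι} (hab : a ≠ b) : T hab x ∈ N := by
    obtain ⟨k, hki, hka⟩ := ENat.exists_ne_ne_of_three_le hι' i a
    exact row hka.symm hab (col hki.symm hka.symm (row hij hki.symm hx))
  refine (Subgroup.closure_le N).2 ?_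
  rintro _ ⟨a, b, hab, c, hc, rfl⟩
  obtain ⟨y, rfl⟩ := Ideal.mem_span_singleton.1 hc
  obtain ⟨k, hka, hkb⟩ := ENat.exists_ne_ne_of_three_le hι' a b
  exact transvection_mul_mem_of_right_ne (all hka.symm) hkb hab y

end Normal

section Block

variable {ι R : Type*} [Fintype ι] [DecidableEq ι] [CommRing R]
variable {I : Ideal R} {g : SL ι R}
variable {κ κ' : Type*} [Fintype κ] [DecidableEq κ] [Fintype κ'] [DecidableEq κ']

/-- The embedding of `SL κ` into `SL ι` as a diagonal block, extended by `1`, along a decomposition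
`e` of `ι` into `κ` and a complement. -/
def blockEmbedding (R : Type*) [CommRing R] (e : κ ⊕ κ' ≃ ι) : SL κ R →* SL ι R where
  toFun M := ⟨reindex e e (fromBlocks M.1 0 0 1), by simp⟩
  map_one' := Subtype.ext <| by simp
  map_mul' M M' := Subtype.ext <| by
    change _ = reindex e e (fromBlocks M.1 0 0 1) * reindex e e (fromBlocks M'.1 0 0 1)
    simp [fromBlocks_multiply]

theorem blockEmbedding_apply (e : κ ⊕ κ' ≃ ι) (M : SL κ R) (a b : κ ⊕ κ') :
    blockEmbedding R e M (e a) (e b) = fromBlocks M.1 0 0 1 a b := by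
  change reindex e e (fromBlocks M.1 0 0 1) (e a) (e b) = _
  simp

theorem blockEmbedding_transvection (e : κ ⊕ κ' ≃ ι) {a b : κ} (hab : a ≠ b) (c : R) :
    blockEmbedding R e (T hab c) = T (e.injective.ne (Sum.inl_injective.ne hab)) c := by
  apply Subtype.ext
  ext x y
  obtain ⟨x, rfl⟩ := e.surjective x
  obtain ⟨y, rfl⟩ := e.surjective y
  rw [blockEmbedding_apply]
  obtain x | x := x <;> obtain y | y := y <;> simp [transvection_coe, single_apply, one_apply]

theorem blockEmbedding_mem_principalCongruenceSubgroup (e : κ ⊕ κ' ≃ ι) {M : SL κ R} :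
    blockEmbedding R e M ∈ principalCongruenceSubgroup ι I ↔
      M ∈ principalCongruenceSubgroup κ I := by
  simp [mem_principalCongruenceSubgroup, e.surjective.forall, Sum.forall, blockEmbedding_apply,
    one_apply]

theorem exists_blockEmbedding_eq (e : κ ⊕ κ' ≃ ι) {S : Finset κ}
    (hg : g ∈ supportedSubgroup R (S.map (Function.Embedding.inl.trans e.toEmbedding))) :
    ∃ M ∈ supportedSubgroup R S, blockEmbedding R e M = g := by
  rw [mem_supportedSubgroup] at hg
  let M : Matrix κ κ R := g.1.submatrix (e ∘ .inl) (e ∘ .inl)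
  have hM : reindex e e (fromBlocks M 0 0 1) = g.1 := by
    ext x y
    obtain ⟨x, rfl⟩ := e.surjective x
    obtain ⟨y, rfl⟩ := e.surjective y
    obtain x | x := x <;> obtain y | y := y
    · simp [M]
    · simp [hg _ (e (.inr y))]
    · simp [hg (e (.inr x))]
    · simp [hg (e (.inr x)), one_apply]
  have hdet : M.det = 1 := by
    simpa [← hM] using g.det_coe
  refine ⟨⟨M, hdet⟩, mem_supportedSubgroup.2 fun a b hab ↦ ?_, Subtype.ext hM⟩
  have := hg (e (.inl a)) (e (.inl b)) (by simpa using hab)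
  simpa [M, one_apply] using this

end Block

local notation "T[" i "," j "]" => T (by decide : (i : Fin 3) ≠ j)

section FinThree

variable {R : Type*} [CommRing R]

theorem transvection_zero_one_coe (x : R) : (T[0, 1] x).1 = !![1, x, 0; 0, 1, 0; 0, 0, 1] := by
  ext i j; fin_cases i <;> fin_cases j <;> simp [transvection_coe]

theorem transvection_zero_two_coe (x : R) : (T[0, 2] x).1 = !![1, 0, x; 0, 1, 0; 0, 0, 1] := by
  ext i j; fin_cases i <;> fin_cases j <;> simp [transvection_coe]

theorem transvection_one_zero_coe (x : R) : (T[1, 0] x).1 = !![1, 0, 0; x, 1, 0; 0, 0, 1] := by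
  ext i j; fin_cases i <;> fin_cases j <;> simp [transvection_coe]

theorem transvection_one_two_coe (x : R) : (T[1, 2] x).1 = !![1, 0, 0; 0, 1, x; 0, 0, 1] := by
  ext i j; fin_cases i <;> fin_cases j <;> simp [transvection_coe]

theorem transvection_two_zero_coe (x : R) : (T[2, 0] x).1 = !![1, 0, 0; 0, 1, 0; x, 0, 1] := by
  ext i j; fin_cases i <;> fin_cases j <;> simp [transvection_coe]

theorem transvection_two_one_coe (x : R) : (T[2, 1] x).1 = !![1, 0, 0; 0, 1, 0; 0, x, 1] := by
  ext i j; fin_cases i <;> fin_cases j <;> simp [transvection_coe]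

/-- The embedding of `SL₂` in the upper left corner of `SL₃`. -/
def cornerEmbedding (R : Type*) [CommRing R] : SL (Fin 2) R →* SL (Fin 3) R :=
  blockEmbedding R (finSumFinEquiv : Fin 2 ⊕ Fin 1 ≃ Fin 3)

local notation "ε" => cornerEmbedding R

theorem cornerEmbedding_coe (M : SL (Fin 2) R) :
    (ε M).1 = !![M 0 0, M 0 1, 0; M 1 0, M 1 1, 0; 0, 0, 1] := by
  ext i j
  obtain ⟨i, rfl⟩ := (finSumFinEquiv : Fin 2 ⊕ Fin 1 ≃ Fin 3).surjective i
  obtain ⟨j, rfl⟩ := (finSumFinEquiv : Fin 2 ⊕ Fin 1 ≃ Fin 3).surjective j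
  rw [cornerEmbedding, blockEmbedding_apply]
  fin_cases i <;> fin_cases j <;> rfl

theorem exists_conj_cornerEmbedding_coe_eq_zero_two :
    ∃ w ∈ elementarySubgroup (Fin 3) (⊤ : Ideal R), ∀ M : SL (Fin 2) R,
      (w * ε M * w⁻¹).1 = !![M 0 0, 0, M 0 1; 0, 1, 0; M 1 0, 0, M 1 1] := by
  refine ⟨T[2, 1] 1 * T[1, 2] (-1) * T[2, 1] 1, ?_, fun M ↦ ?_⟩
  · exact mul_mem (mul_mem (transvection_mem_elementarySubgroup _ trivial)
      (transvection_mem_elementarySubgroup _ trivial))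
      (transvection_mem_elementarySubgroup _ trivial)
  · simp [transvection_inv, transvection_two_one_coe, transvection_one_two_coe,
      cornerEmbedding_coe, mul_assoc]

theorem exists_conj_cornerEmbedding_coe_eq_one_two :
    ∃ w ∈ elementarySubgroup (Fin 3) (⊤ : Ideal R), ∀ M : SL (Fin 2) R,
      (w * ε M * w⁻¹).1 = !![1, 0, 0; 0, M 0 0, M 0 1; 0, M 1 0, M 1 1] := by
  obtain ⟨w, hw, hwM⟩ := exists_conj_cornerEmbedding_coe_eq_zero_two (R := R)
  let w' : SL (Fin 3) R := T[1, 0] 1 * T[0, 1] (-1) * T[1, 0] 1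
  refine ⟨w' * w, mul_mem ?_ hw, fun M ↦ ?_⟩
  · exact mul_mem (mul_mem (transvection_mem_elementarySubgroup _ trivial)
      (transvection_mem_elementarySubgroup _ trivial))
      (transvection_mem_elementarySubgroup _ trivial)
  · have hconj : w' * w * ε M * (w' * w)⁻¹ = w' * (w * ε M * w⁻¹) * w'⁻¹ := by group
    rw [hconj, coe_mul, coe_mul, hwM]
    simp [w', transvection_inv, transvection_zero_one_coe, transvection_one_zero_coe, mul_assoc]

section Commute

variable {I : Ideal R} {Q : Type*} [Group Q] {F : SL (Fin 3) R →* Q}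

theorem map_transvection_eq_of_sub_mem {i j : Fin 3} (hF : elementarySubgroup (Fin 3) I ≤ F.ker)
    (hij : i ≠ j) {x y : R} (hxy : x - y ∈ I) : F (T hij x) = F (T hij y) := by
  rw [← sub_add_cancel x y, transvection_add, map_mul,
    MonoidHom.mem_ker.1 (hF (transvection_mem_elementarySubgroup hij hxy)), one_mul]

theorem map_transvection_eq_one {i j : Fin 3} (hF : elementarySubgroup (Fin 3) I ≤ F.ker)
    (hij : i ≠ j) {x : R} (hx : x ∈ I) : F (T hij x) = 1 :=
  hF (transvection_mem_elementarySubgroup hij hx)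

variable {M : SL (Fin 2) R}

theorem mem_principalCongruenceSubgroup_fin_two :
    M ∈ principalCongruenceSubgroup (Fin 2) I ↔
      (M 0 0 - 1 ∈ I ∧ M 0 1 ∈ I) ∧ M 1 0 ∈ I ∧ M 1 1 - 1 ∈ I := by
  simp [mem_principalCongruenceSubgroup]

theorem commute_map_cornerEmbedding_transvection_two (hF : elementarySubgroup (Fin 3) I ≤ F.ker)
    (hM : M ∈ principalCongruenceSubgroup (Fin 2) I) {j : Fin 3} (hj : j ≠ 2) (x : R) :
    Commute (F (ε M)) (F (T hj x)) := by
  obtain ⟨⟨ha, hb⟩, hc, hd⟩ := mem_principalCongruenceSubgroup_fin_two.1 hM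
  have h₀ : ε M * T[0, 2] x = T[0, 2] (M 0 0 * x) * T[1, 2] (M 1 0 * x) * ε M := by
    apply Subtype.ext
    simp [cornerEmbedding_coe, transvection_zero_two_coe, transvection_one_two_coe]
  have h₁ : ε M * T[1, 2] x = T[1, 2] (M 1 1 * x) * T[0, 2] (M 0 1 * x) * ε M := by
    apply Subtype.ext
    simp [cornerEmbedding_coe, transvection_zero_two_coe, transvection_one_two_coe]
  have eq {a x : R} (ha : a - 1 ∈ I) : a * x - x ∈ I := by
    simpa [sub_mul] using I.mul_mem_right x ha
  fin_cases j
  · have := congrArg F h₀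
    rwa [map_mul, map_mul, map_mul, map_transvection_eq_one hF _ (I.mul_mem_right x hc), mul_one,
      map_transvection_eq_of_sub_mem hF _ (eq ha)] at this
  · have := congrArg F h₁
    rwa [map_mul, map_mul, map_mul, map_transvection_eq_one hF _ (I.mul_mem_right x hb), mul_one,
      map_transvection_eq_of_sub_mem hF _ (eq hd)] at this
  · exact absurd rfl hj

theorem commute_map_cornerEmbedding_two_transvection (hF : elementarySubgroup (Fin 3) I ≤ F.ker)
    (hM : M ∈ principalCongruenceSubgroup (Fin 2) I) {j : Fin 3} (hj : 2 ≠ j) (x : R) :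
    Commute (F (ε M)) (F (T hj x)) := by
  obtain ⟨⟨ha, hb⟩, hc, hd⟩ := mem_principalCongruenceSubgroup_fin_two.1 hM
  have h₀ : T[2, 0] x * ε M = ε M * (T[2, 0] (x * M 0 0) * T[2, 1] (x * M 0 1)) := by
    apply Subtype.ext
    simp [cornerEmbedding_coe, transvection_two_zero_coe, transvection_two_one_coe]
  have h₁ : T[2, 1] x * ε M = ε M * (T[2, 1] (x * M 1 1) * T[2, 0] (x * M 1 0)) := by
    apply Subtype.ext
    simp [cornerEmbedding_coe, transvection_two_zero_coe, transvection_two_one_coe]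
  have eq {a x : R} (ha : a - 1 ∈ I) : x * a - x ∈ I := by
    simpa [mul_sub] using I.mul_mem_left x ha
  fin_cases j
  · have := congrArg F h₀
    rw [map_mul, map_mul, map_mul, map_transvection_eq_one hF _ (I.mul_mem_left x hb), mul_one,
      map_transvection_eq_of_sub_mem hF _ (eq ha)] at this
    exact this.symm
  · have := congrArg F h₁
    rw [map_mul, map_mul, map_mul, map_transvection_eq_one hF _ (I.mul_mem_left x hc), mul_one,
      map_transvection_eq_of_sub_mem hF _ (eq hd)] at this
    exact this.symm
  · exact absurd rfl hj

theorem commute_map_cornerEmbedding (hF : elementarySubgroup (Fin 3) I ≤ F.ker)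
    (hM : M ∈ principalCongruenceSubgroup (Fin 2) I) {w : SL (Fin 3) R}
    (hw : w ∈ elementarySubgroup (Fin 3) ⊤) : Commute (F (ε M)) (F w) := by
  suffices elementarySubgroup (Fin 3) ⊤ ≤ (Subgroup.centralizer {F (ε M)}).comap F from
    (Subgroup.mem_centralizer_singleton_iff.1 (this hw)).symm
  refine (Subgroup.closure_le _).2 ?_
  rintro _ ⟨i, j, hij, x, -, rfl⟩
  refine Subgroup.mem_centralizer_singleton_iff.2 (Commute.eq ?_).symm
  by_cases hj : j = 2
  · subst hj
    exact commute_map_cornerEmbedding_transvection_two hF hM hij x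
  by_cases hi : i = 2
  · subst hi
    exact commute_map_cornerEmbedding_two_transvection hF hM hij x
  have hcol := commute_map_cornerEmbedding_transvection_two hF hM hi x
  have hrow := commute_map_cornerEmbedding_two_transvection hF hM (Ne.symm hj) 1
  rw [← mul_one x, ← commutator_transvection hi (Ne.symm hj), map_commutatorElement,
    commutatorElement_def]
  exact ((hcol.mul_right hrow).mul_right hcol.inv_right).mul_right hrow.inv_right

theorem map_conj_cornerEmbedding (hF : elementarySubgroup (Fin 3) I ≤ F.ker)
    (hM : M ∈ principalCongruenceSubgroup (Fin 2) I) {w : SL (Fin 3) R}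
    (hw : w ∈ elementarySubgroup (Fin 3) ⊤) : F (w * ε M * w⁻¹) = F (ε M) := by
  rw [map_mul, map_mul, map_inv, ← (commute_map_cornerEmbedding hF hM hw).eq, mul_inv_cancel_right]

end Commute

end FinThree

section Mennicke

variable {R Q : Type*} [CommRing R] [Group Q] {F : SL (Fin 3) R →* Q} {I : Ideal R}
variable {a b c d t b₁ b₂ : R} {q q' q₁ q₂ : Q}

/-- `q` is a value at `(a, b)` of the Mennicke symbol of level `I` with values in `Q`: it is the
image under `F` of a matrix in the upper left corner of `SL₃`, congruent to `1` modulo `I`, whose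
first row is `(a, b)`. As a relation it needs no choice of the second row. -/
def IsMennickeSymbol (F : SL (Fin 3) R →* Q) (I : Ideal R) (a b : R) (q : Q) : Prop :=
  ∃ M ∈ principalCongruenceSubgroup (Fin 2) I, M 0 0 = a ∧ M 0 1 = b ∧ F (cornerEmbedding R M) = q

theorem cornerEmbedding_transvection_mem_elementarySubgroup {i j : Fin 2} (hij : i ≠ j)
    (hc : c ∈ I) : cornerEmbedding R (T hij c) ∈ elementarySubgroup (Fin 3) I := by
  rw [cornerEmbedding, blockEmbedding_transvection]
  exact transvection_mem_elementarySubgroup _ hc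

theorem det_fin_two_eq_one (M : SL (Fin 2) R) : M 0 0 * M 1 1 - M 0 1 * M 1 0 = 1 := by
  rw [← det_fin_two, M.det_coe]

theorem exists_mem_principalCongruenceSubgroup_fin_two (h : a * d - b * c = 1) (ha : a - 1 ∈ I)
    (hb : b ∈ I) (hc : c ∈ I) :
    ∃ M ∈ principalCongruenceSubgroup (Fin 2) I, M.1 = !![a, b; c, d] := by
  refine ⟨⟨!![a, b; c, d], by rw [det_fin_two_of, h]⟩,
    mem_principalCongruenceSubgroup_fin_two.2 ⟨⟨ha, hb⟩, hc, ?_⟩, rfl⟩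
  have hd : b * c - (a - 1) * d = d - 1 := by linear_combination -h
  exact hd ▸ I.sub_mem (I.mul_mem_right c hb) (I.mul_mem_right d ha)

/-- The matrix identity behind multiplicativity: a block in rows `0, 1` times a block in rows
`1, 2` becomes a block in rows `0, 2` after elementary operations. -/
theorem matrix_zero_one_mul_one_two {a b₁ c₁ d₁ : R} (h₁ : a * d₁ - b₁ * c₁ = 1) (b₂ c₂ d₂ : R) :
    !![a, b₁, 0; c₁, d₁, 0; 0, 0, 1] * !![1, 0, 0; 0, a, b₂; 0, c₂, d₂] * (T[0, 1] (-b₁)).1 *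
      (T[1, 0] (-c₁)).1 * (T[1, 2] (-(d₁ * b₂))).1 =
    (T[2, 1] c₂).1 * !![a, 0, b₁ * b₂; 0, 1, 0; -c₁ * c₂, 0, d₂ - d₁ * b₂ * c₂] := by
  have h₁' : -(c₁ * b₁) + d₁ * a = 1 := by linear_combination h₁
  have h : -(a * b₁) + b₁ * a = 0 := by ring
  simp only [transvection_zero_one_coe, transvection_one_zero_coe, transvection_one_two_coe,
    transvection_two_one_coe]
  simp [h, h₁']
  constructor <;> ring

namespace IsMennickeSymbol

theorem exists_of_isCoprime (F : SL (Fin 3) R →* Q) (ha : a - 1 ∈ I) (hb : b ∈ I)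
    (hab : IsCoprime a b) : ∃ q, IsMennickeSymbol F I a b q := by
  obtain ⟨u, v, huv⟩ := hab
  have hdet : a * (u + v * b) - b * (v * (a - 1)) = 1 := by linear_combination huv
  obtain ⟨M, hM, hM'⟩ :=
    exists_mem_principalCongruenceSubgroup_fin_two hdet ha hb (I.mul_mem_left v ha)
  exact ⟨_, M, hM, by simp [hM'], by simp [hM'], rfl⟩

theorem isCoprime (h : IsMennickeSymbol F I a b q) : IsCoprime a b := by
  obtain ⟨M, -, rfl, rfl, -⟩ := h
  exact M.isCoprime_row 0

theorem sub_one_mem (h : IsMennickeSymbol F I a b q) : a - 1 ∈ I := by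
  obtain ⟨M, hM, rfl, -, -⟩ := h
  exact (mem_principalCongruenceSubgroup_fin_two.1 hM).1.1

theorem right_mem (h : IsMennickeSymbol F I a b q) : b ∈ I := by
  obtain ⟨M, hM, -, rfl, -⟩ := h
  exact (mem_principalCongruenceSubgroup_fin_two.1 hM).1.2

theorem unique (hF : elementarySubgroup (Fin 3) I ≤ F.ker) (h : IsMennickeSymbol F I a b q)
    (h' : IsMennickeSymbol F I a b q') : q = q' := by
  obtain ⟨M, hM, rfl, rfl, rfl⟩ := h
  obtain ⟨M', hM', h₀, h₁, rfl⟩ := h'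
  have hc := (mem_principalCongruenceSubgroup_fin_two.1 hM).2.1
  have hc' := (mem_principalCongruenceSubgroup_fin_two.1 hM').2.1
  have hdet := det_fin_two_eq_one M
  have hdet' := det_fin_two_eq_one M'
  rw [h₀, h₁] at hdet'
  have hMM' : M = T one_ne_zero (M' 1 1 * M 1 0 - M' 1 0 * M 1 1) * M' := by
    apply Subtype.ext
    ext i j
    rw [transvection_mul_coe_apply]
    fin_cases i <;> fin_cases j <;> simp [h₀, h₁]
    · linear_combination M' 1 0 * hdet - M 1 0 * hdet'
    · linear_combination M' 1 1 * hdet - M 1 1 * hdet'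
  have hmem := I.sub_mem (I.mul_mem_left (M' 1 1) hc) (I.mul_mem_right (M 1 1) hc')
  rw [hMM', map_mul, map_mul,
    MonoidHom.mem_ker.1 (hF (cornerEmbedding_transvection_mem_elementarySubgroup _ hmem)), one_mul]

theorem add_mul_right (hF : elementarySubgroup (Fin 3) I ≤ F.ker) (h : IsMennickeSymbol F I a b q)
    (ht : t ∈ I) : IsMennickeSymbol F I a (b + a * t) q := by
  obtain ⟨M, hM, rfl, rfl, rfl⟩ := h
  refine ⟨M * T zero_ne_one t, mul_mem hM (transvection_mem_principalCongruenceSubgroup _ ht),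
    ?_, ?_, ?_⟩
  · simp [mul_transvection_coe_apply]
  · simp [mul_transvection_coe_apply]
  · rw [map_mul, map_mul,
      MonoidHom.mem_ker.1 (hF (cornerEmbedding_transvection_mem_elementarySubgroup _ ht)), mul_one]

theorem add_mul_left (hF : elementarySubgroup (Fin 3) I ≤ F.ker) (h : IsMennickeSymbol F I a b q)
    (t : R) : IsMennickeSymbol F I (a + b * t) b q := by
  obtain ⟨M, hM, rfl, rfl, rfl⟩ := h
  refine ⟨T one_ne_zero (-t) * M * T one_ne_zero t, ?_, ?_, ?_, ?_⟩
  · simpa [transvection_inv] using Subgroup.Normal.conj_mem inferInstance M hM (T one_ne_zero (-t))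
  · simp [mul_transvection_coe_apply, transvection_mul_coe_apply]
  · simp [mul_transvection_coe_apply, transvection_mul_coe_apply]
  · have := map_conj_cornerEmbedding hF hM
      (cornerEmbedding_transvection_mem_elementarySubgroup one_ne_zero
        (Submodule.mem_top (x := -t)))
    rwa [← map_inv, transvection_inv, neg_neg, ← map_mul, ← map_mul] at this

theorem one_left (hF : elementarySubgroup (Fin 3) I ≤ F.ker) (hb : b ∈ I) :
    IsMennickeSymbol F I 1 b 1 :=
  ⟨T zero_ne_one b, transvection_mem_principalCongruenceSubgroup _ hb, by simp [transvection_coe],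
    by simp [transvection_coe], hF (cornerEmbedding_transvection_mem_elementarySubgroup _ hb)⟩

theorem mul (hF : elementarySubgroup (Fin 3) I ≤ F.ker) (h₁ : IsMennickeSymbol F I a b₁ q₁)
    (h₂ : IsMennickeSymbol F I a b₂ q₂) : IsMennickeSymbol F I a (b₁ * b₂) (q₁ * q₂) := by
  have ha := h₁.sub_one_mem
  have hb₁ := h₁.right_mem
  have hb₂ := h₂.right_mem
  obtain ⟨M₁, hM₁, rfl, rfl, rfl⟩ := h₁
  obtain ⟨M₂, hM₂, h₀, rfl, rfl⟩ := h₂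
  have hc₁ := (mem_principalCongruenceSubgroup_fin_two.1 hM₁).2.1
  have hc₂ := (mem_principalCongruenceSubgroup_fin_two.1 hM₂).2.1
  have hdet₁ := det_fin_two_eq_one M₁
  have hdet₂ := det_fin_two_eq_one M₂
  rw [h₀] at hdet₂
  have hdet : M₁ 0 0 * (M₂ 1 1 - M₁ 1 1 * M₂ 0 1 * M₂ 1 0) -
      M₁ 0 1 * M₂ 0 1 * (- M₁ 1 0 * M₂ 1 0) = 1 := by
    linear_combination hdet₂ - M₂ 0 1 * M₂ 1 0 * hdet₁
  obtain ⟨M, hM, hM'⟩ := exists_mem_principalCongruenceSubgroup_fin_two hdet ha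
    (I.mul_mem_left _ hb₂) (I.mul_mem_left _ hc₂)
  obtain ⟨w, hw, hwM⟩ := exists_conj_cornerEmbedding_coe_eq_zero_two (R := R)
  obtain ⟨w', hw', hwM'⟩ := exists_conj_cornerEmbedding_coe_eq_one_two (R := R)
  have key : cornerEmbedding R M₁ * (w' * cornerEmbedding R M₂ * w'⁻¹) * T[0, 1] (-M₁ 0 1) *
      T[1, 0] (-M₁ 1 0) * T[1, 2] (-(M₁ 1 1 * M₂ 0 1)) =
      T[2, 1] (M₂ 1 0) * (w * cornerEmbedding R M * w⁻¹) := by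
    apply Subtype.ext
    rw [coe_mul, coe_mul, coe_mul, coe_mul, hwM', coe_mul, hwM, cornerEmbedding_coe]
    simpa [hM', h₀] using matrix_zero_one_mul_one_two hdet₁ (M₂ 0 1) (M₂ 1 0) (M₂ 1 1)
  refine ⟨M, hM, by simp [hM'], by simp [hM'], ?_⟩
  have hF_key := congrArg F key
  simp_rw [map_mul _ (_ * _) (T _ _), map_mul _ (T _ _), map_mul _ (cornerEmbedding R M₁)] at hF_key
  rw [map_transvection_eq_one hF _ (I.neg_mem hb₁), map_transvection_eq_one hF _ (I.neg_mem hc₁),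
    map_transvection_eq_one hF _ (I.neg_mem (I.mul_mem_left _ hb₂)),
    map_transvection_eq_one hF _ hc₂, map_conj_cornerEmbedding hF hM₂ hw',
    map_conj_cornerEmbedding hF hM hw] at hF_key
  simpa using hF_key.symm

end IsMennickeSymbol

end Mennicke

section Principal

variable {R Q : Type*} [CommRing R] [Group Q] {F : SL (Fin 3) R →* Q}
variable {a a' b b' b₁ b₂ l u : R} {q q₁ q₂ : Q}

namespace IsMennickeSymbol

theorem congr_left {I : Ideal R} (hF : elementarySubgroup (Fin 3) I ≤ F.ker)
    (h : IsMennickeSymbol F I a b q) (ha : b ∣ a' - a) : IsMennickeSymbol F I a' b q := by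
  obtain ⟨t, ht⟩ := ha
  rw [sub_eq_iff_eq_add'.1 ht]
  exact h.add_mul_left hF t

section

variable (hF : elementarySubgroup (Fin 3) (Ideal.span {l}) ≤ F.ker)
include hF

theorem congr_right_of_span (h : IsMennickeSymbol F (Ideal.span {l}) a (l * b) q)
    (hb : a ∣ b' - b) : IsMennickeSymbol F (Ideal.span {l}) a (l * b') q := by
  obtain ⟨t, ht⟩ := hb
  have h' := h.add_mul_right hF (Ideal.mul_mem_right t _ (Ideal.mem_span_singleton_self l))
  rwa [show l * b + a * (l * t) = l * b' by linear_combination -l * ht] at h'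

theorem of_isUnit (ha : a - 1 ∈ Ideal.span {l}) (hu : IsUnit u) :
    IsMennickeSymbol F (Ideal.span {l}) a (l * u) 1 :=
  (one_left hF (Ideal.mul_mem_right u _ (Ideal.mem_span_singleton_self l))).congr_left hF
    (hu.mul_right_dvd.2 (Ideal.mem_span_singleton.1 ha))

theorem mul_of_span (h₁ : IsMennickeSymbol F (Ideal.span {l}) a (l * b₁) q₁)
    (h₂ : IsMennickeSymbol F (Ideal.span {l}) a (l * b₂) q₂) :
    IsMennickeSymbol F (Ideal.span {l}) a (l * (b₁ * b₂)) (q₁ * q₂) := by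
  have ha := h₁.sub_one_mem
  have hab : IsCoprime a (l * (b₁ * b₂)) :=
    h₁.isCoprime.of_mul_right_left.mul_right
      (h₁.isCoprime.of_mul_right_right.mul_right h₂.isCoprime.of_mul_right_right)
  obtain ⟨q, hq⟩ := exists_of_isCoprime F ha
    (Ideal.mul_mem_right _ _ (Ideal.mem_span_singleton_self l)) hab
  -- The symbol at `(a, l)` is `1`, so both products are symbols at `(a, l * l * (b₁ * b₂))`.
  have hq' := (of_isUnit hF ha isUnit_one).mul hF hq
  rw [one_mul, show l * 1 * (l * (b₁ * b₂)) = l * b₁ * (l * b₂) by ring] at hq'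
  rwa [(h₁.mul hF h₂).unique hF hq']

theorem pow_of_span (h : IsMennickeSymbol F (Ideal.span {l}) a (l * b) q) (k : ℕ) :
    IsMennickeSymbol F (Ideal.span {l}) a (l * b ^ k) (q ^ k) := by
  induction k with
  | zero => simpa using of_isUnit hF h.sub_one_mem isUnit_one
  | succ k ih => simpa only [pow_succ] using ih.mul_of_span hF h

theorem pow_eq_one (h : IsMennickeSymbol F (Ideal.span {l}) a (l * b) q) {k : ℕ} (hu : IsUnit u)
    (hub : a ∣ u - b ^ k) : q ^ k = 1 :=
  ((h.pow_of_span hF k).congr_right_of_span hF hub).unique hF (of_isUnit hF h.sub_one_mem hu)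

end

end IsMennickeSymbol

end Principal

section Arithmetic

theorem exists_odd_add_mul {a b : ℤ} (hab : IsCoprime a b) : ∃ t, Odd (b + a * t) := by
  by_cases hb : Odd b
  · exact ⟨0, by simpa⟩
  · have ha : Odd a := by
      by_contra ha
      rw [Int.not_odd_iff_even, even_iff_two_dvd] at ha hb
      exact absurd (hab.isUnit_of_dvd' ha hb) (by decide)
    exact ⟨1, by simpa using (Int.not_odd_iff_even.1 hb).add_odd ha⟩

theorem exists_prime_gt_dvd_sub (n : ℕ) {m x : ℤ} (hm : m ≠ 0) (hx : IsCoprime x m) :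
    ∃ p : ℕ, n < p ∧ p.Prime ∧ m ∣ p - x := by
  have hx' : IsCoprime x m.natAbs := by
    rw [Int.natCast_natAbs]
    exact hx.abs_right
  obtain ⟨p, hnp, hp, hpx⟩ :=
    Nat.forall_exists_prime_gt_and_zmodEq n (Int.natAbs_ne_zero.2 hm) hx'
  exact ⟨p, hnp, hp, Int.natAbs_dvd.1 hpx.symm.dvd⟩

theorem exists_prime_mod_four_eq_three_dvd_add {a b l : ℤ} (hl : l ≠ 0) (ha : l ∣ a - 1)
    (hb : Odd b) (hab : IsCoprime a (l * b)) : ∃ p : ℕ, p.Prime ∧ p % 4 = 3 ∧ l * b ∣ p + a := by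
  obtain ⟨k, hk⟩ := ha
  obtain ⟨j, hj⟩ := Int.eight_dvd_sq_sub_one_of_odd hb
  -- `a - l b (k b) = 1 - l k (b² - 1)` is `1` modulo `4` because `b` is odd.
  have ha₄ : IsCoprime (a - l * b * (k * b)) 4 :=
    ⟨1, 2 * l * k * j, by linear_combination hk - l * k * hj⟩
  have hcop : IsCoprime (-(a - l * b * (k * b))) (4 * (l * b)) := by
    refine (ha₄.mul_right ?_).neg_left
    rw [sub_eq_add_neg, ← mul_neg]
    exact hab.add_mul_left_left _
  have hb₀ : b ≠ 0 := by rintro rfl; simp at hb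
  obtain ⟨p, -, hp, c, hc⟩ := exists_prime_gt_dvd_sub 0
    (mul_ne_zero four_ne_zero (mul_ne_zero hl hb₀)) hcop
  refine ⟨p, hp, ?_, 4 * c + k * b, by linear_combination hc⟩
  have : (p : ℤ) = 4 * (l * b * c + 2 * l * k * j) - 1 := by
    linear_combination hc - hk + l * k * hj
  omega

theorem exists_prime_dvd_sub_isCoprime_sub_one {m n x : ℤ} (hn : n ≠ 0) (hm : Odd m)
    (hmn : IsCoprime m n) (hx : IsCoprime x n) :
    ∃ p : ℕ, p.Prime ∧ n ∣ p - x ∧ IsCoprime m (p - 1) := by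
  obtain ⟨u, v, huv⟩ := hmn
  -- `y` is `x` modulo `n` and `-1` modulo `m`.
  let y := x * (u * m) - v * n
  have hyn : IsCoprime y n := by
    have hy : y = x + n * -((x + 1) * v) := by linear_combination x * huv
    exact hy ▸ hx.add_mul_left_left _
  have hym : IsCoprime y m := by
    have hy : y = -1 + m * (u * (x + 1)) := by linear_combination -huv
    exact hy ▸ isCoprime_one_left.neg_left.add_mul_left_left _
  have hm₀ : m ≠ 0 := by rintro rfl; simp at hm
  obtain ⟨p, -, hp, c, hc⟩ := exists_prime_gt_dvd_sub 0 (mul_ne_zero hm₀ hn) (hym.mul_right hyn)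
  refine ⟨p, hp, ⟨m * c - (x + 1) * v, by linear_combination hc + x * huv⟩, ?_⟩
  obtain ⟨j, hj⟩ := hm
  have hm₂ : IsCoprime m (-2) := ⟨1, j, by linear_combination hj⟩
  have hpm : (p : ℤ) - 1 = -2 + m * (u * (x + 1) + n * c) := by linear_combination hc - huv
  exact hpm ▸ hm₂.add_mul_left_right _

end Arithmetic

section Triviality

variable {Q : Type*} [Group Q] {F : SL (Fin 3) ℤ →* Q} {a b l : ℤ} {q : Q}

namespace IsMennickeSymbol

theorem pow_sub_one_eq_one (hF : elementarySubgroup (Fin 3) (Ideal.span {l}) ≤ F.ker) {p : ℕ}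
    (hp : p.Prime) (h : IsMennickeSymbol F (Ideal.span {l}) (-p) (l * b) q) : q ^ (p - 1) = 1 := by
  have hbp : IsCoprime b p := (IsCoprime.neg_left_iff _ _).1 h.isCoprime.of_mul_right_right |>.symm
  exact h.pow_eq_one hF isUnit_one
    ((neg_dvd).2 (Int.ModEq.pow_card_sub_one_eq_one hp hbp).dvd)

theorem pow_div_two_eq_one (hF : elementarySubgroup (Fin 3) (Ideal.span {l}) ≤ F.ker) {p : ℕ}
    (hp : p.Prime) (h : IsMennickeSymbol F (Ideal.span {l}) (-p) (l * b) q) : q ^ (p / 2) = 1 := by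
  have : Fact p.Prime := ⟨hp⟩
  have hbp : IsCoprime b p := (IsCoprime.neg_left_iff _ _).1 h.isCoprime.of_mul_right_right |>.symm
  have hb : (b : ZMod p) ≠ 0 :=
    ((ZMod.coe_int_isUnit_iff_isCoprime b p).2 hbp.symm).ne_zero
  obtain hb | hb := ZMod.pow_div_two_eq_neg_one_or_one p hb
  · refine h.pow_eq_one hF isUnit_one (neg_dvd.2 ?_)
    simp [← ZMod.intCast_zmod_eq_zero_iff_dvd, hb]
  · refine h.pow_eq_one hF isUnit_one.neg (neg_dvd.2 ?_)
    simp [← ZMod.intCast_zmod_eq_zero_iff_dvd, hb]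

theorem eq_one (hF : elementarySubgroup (Fin 3) (Ideal.span {l}) ≤ F.ker) (hl : l ≠ 0)
    (h : IsMennickeSymbol F (Ideal.span {l}) a (l * b) q) : q = 1 := by
  obtain ⟨t, hodd⟩ := exists_odd_add_mul h.isCoprime.of_mul_right_right
  replace h : IsMennickeSymbol F (Ideal.span {l}) a (l * (b + a * t)) q :=
    h.congr_right_of_span hF ⟨t, by ring⟩
  obtain ⟨p, hp, hp₄, hpa⟩ := exists_prime_mod_four_eq_three_dvd_add hl
    (Ideal.mem_span_singleton.1 h.sub_one_mem) hodd h.isCoprime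
  replace h : IsMennickeSymbol F (Ideal.span {l}) (-p) (l * (b + a * t)) q :=
    h.congr_left hF (by rwa [← neg_add', dvd_neg])
  obtain ⟨r, hpr, hr, hrb⟩ := exists_prime_gt_dvd_sub p (neg_ne_zero.2 (mod_cast hp.ne_zero))
    h.isCoprime.of_mul_right_right.symm
  replace h : IsMennickeSymbol F (Ideal.span {l}) (-p) (l * r) q := h.congr_right_of_span hF hrb
  have hm : Odd ((p / 2 : ℕ) : ℤ) := (Int.odd_coe_nat _).2 (Nat.odd_iff.2 (by omega))
  have hml : IsCoprime ((p / 2 : ℕ) : ℤ) l := by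
    obtain ⟨k, hk⟩ := Ideal.mem_span_singleton.1 h.sub_one_mem
    obtain ⟨j, hj⟩ := hm
    have hpm : (p : ℤ) = 2 * (p / 2 : ℕ) + 1 := by omega
    exact ⟨2 * j + 1, k * j, by linear_combination -j * hk - j * hpm + hj⟩
  have hmr : IsCoprime ((p / 2 : ℕ) : ℤ) r :=
    Nat.isCoprime_iff_coprime.2 (Nat.coprime_of_lt_prime (by omega) (by omega) hr).symm
  obtain ⟨p', hp', hpp', hcop⟩ := exists_prime_dvd_sub_isCoprime_sub_one
    (mul_ne_zero hl (mod_cast hr.ne_zero)) hm (hml.mul_right hmr)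
    ((IsCoprime.neg_left_iff _ _).1 h.isCoprime)
  have h' : IsMennickeSymbol F (Ideal.span {l}) (-p') (l * r) q :=
    h.congr_left hF (by rwa [← dvd_neg, neg_sub_neg, neg_sub])
  have hgcd : (p / 2).gcd (p' - 1) = 1 := by
    rwa [← Nat.cast_pred hp'.pos, Nat.isCoprime_iff_coprime] at hcop
  simpa [hgcd] using
    pow_gcd_eq_one.2 ⟨h.pow_div_two_eq_one hF hp, h'.pow_sub_one_eq_one hF hp'⟩

end IsMennickeSymbol

theorem map_cornerEmbedding_eq_one (hF : elementarySubgroup (Fin 3) (Ideal.span {l}) ≤ F.ker)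
    (hl : l ≠ 0) {M : SL (Fin 2) ℤ}
    (hM : M ∈ principalCongruenceSubgroup (Fin 2) (Ideal.span {l})) :
    F (cornerEmbedding ℤ M) = 1 := by
  obtain ⟨b, hb⟩ := Ideal.mem_span_singleton.1 (mem_principalCongruenceSubgroup_fin_two.1 hM).1.2
  exact IsMennickeSymbol.eq_one hF hl ⟨M, hM, rfl, hb, rfl⟩

end Triviality

section Reduction

theorem exists_natAbs_add_mul_lt {a b : ℤ} (ha : a ≠ 0) (hab : a.natAbs ≤ b.natAbs) :
    ∃ c : ℤ, (b + a * c).natAbs < b.natAbs := by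
  refine ⟨-(b / a), lt_of_lt_of_le ?_ hab⟩
  rw [mul_neg, ← sub_eq_add_neg, ← Int.emod_def]
  have := Int.abs_eq_natAbs a ▸ Int.emod_lt_abs b ha
  have := Int.emod_nonneg b ha
  omega

theorem exists_natAbs_le_or_exists_eq_zero {ι : Type*} {A : Finset ι} (hA : A.Nonempty)
    (f : ι → ℤ) :
    (∃ i ∈ A, ∃ j ∈ A, i ≠ j ∧ f i ≠ 0 ∧ (f i).natAbs ≤ (f j).natAbs) ∨
      ∃ p ∈ A, ∀ s ∈ A, s ≠ p → f s = 0 := by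
  obtain ⟨p, hp, hmax⟩ := A.exists_max_image (fun s ↦ (f s).natAbs) hA
  by_cases h : ∃ s ∈ A, s ≠ p ∧ f s ≠ 0
  · obtain ⟨s, hs, hsp, h0⟩ := h
    exact .inl ⟨s, hs, p, hp, hsp, h0, hmax s hs⟩
  · push Not at h
    exact .inr ⟨p, hp, h⟩

section CommRing

variable {ι R : Type*} [Fintype ι] [DecidableEq ι] [CommRing R]
variable {I : Ideal R} {S : Finset ι} {N : Subgroup (SL ι R)} {g t : SL ι R} {k p q : ι}

theorem mem_of_coe_apply_self_eq_one (hN : elementarySubgroup ι I ≤ N) (hk : k ∈ S)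
    (hNS : principalCongruenceSubgroup ι I ⊓ supportedSubgroup R (S.erase k) ≤ N)
    (hg : g ∈ principalCongruenceSubgroup ι I ⊓ supportedSubgroup R S) (hkk : g k k = 1) :
    g ∈ N := by
  suffices ∀ A ⊆ S.erase k, (∀ s ∉ A, s ≠ k → g k s = 0 ∧ g s k = 0) → g ∈ N by
    refine this _ subset_rfl fun s hs hsk ↦ ?_
    have hsS : s ∉ S := fun h ↦ hs (Finset.mem_erase.2 ⟨hsk, h⟩)
    have hgS := mem_supportedSubgroup.1 hg.2
    exact ⟨(hgS k s (.inr hsS)).trans (one_apply_ne' hsk),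
      (hgS s k (.inl hsS)).trans (one_apply_ne hsk)⟩
  intro A
  induction A using Finset.induction_on generalizing g with
  | empty =>
    refine fun _ h0 ↦ hNS ⟨hg.1, mem_supportedSubgroup.2 fun i j hij ↦ ?_⟩
    obtain hi | hi := eq_or_ne i k <;> obtain hj | hj := eq_or_ne j k
    · rw [hi, hj, hkk, one_apply_eq]
    · simpa [hi, hj.symm] using (h0 j (by simp) hj).1
    · simpa [hi, hj] using (h0 i (by simp) hi).2
    · exact mem_supportedSubgroup.1 hg.2 i j (by simpa [hi, hj] using hij)
  | insert s A _ ih =>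
    intro hA h0
    rw [Finset.insert_subset_iff, Finset.mem_erase] at hA
    obtain ⟨⟨hsk, hs⟩, hA⟩ := hA
    have hcol : -g s k ∈ I := by
      simpa [hsk] using I.neg_mem (mem_principalCongruenceSubgroup.1 hg.1 s k)
    have hrow : -g k s ∈ I := by
      simpa [hsk.symm] using I.neg_mem (mem_principalCongruenceSubgroup.1 hg.1 k s)
    rw [← N.mul_mem_cancel_left (hN (transvection_mem_elementarySubgroup hsk hcol)),
      ← N.mul_mem_cancel_right (hN (transvection_mem_elementarySubgroup hsk.symm hrow))]
    refine ih ?_ ?_ hA fun x hx hxk ↦ ?_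
    · exact mul_mem (mul_mem ⟨transvection_mem_principalCongruenceSubgroup hsk hcol,
        transvection_mem_supportedSubgroup hsk hs hk _⟩ hg)
        ⟨transvection_mem_principalCongruenceSubgroup hsk.symm hrow,
          transvection_mem_supportedSubgroup hsk.symm hk hs _⟩
    · simp [mul_transvection_coe_apply, transvection_mul_coe_apply, hsk.symm, hkk]
    · simp only [mul_transvection_coe_apply, transvection_mul_coe_apply, hsk.symm, if_false, hkk]
      obtain rfl | hxs := eq_or_ne x s
      · simp
      · simpa [hxs] using h0 x (by simp [hxs, hx]) hxk

theorem isCoprime_coe_apply_of_row_eq_zero (hpk : p ≠ k)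
    (h0 : ∀ s, s ≠ k → s ≠ p → g k s = 0) : IsCoprime (g k k) (g k p) := by
  have h : (g.1 * (g⁻¹).1) k k = 1 := by
    rw [← coe_mul, mul_inv_cancel, coe_one, one_apply_eq]
  rw [mul_apply, Fintype.sum_eq_add k p hpk.symm fun s hs ↦
    by rw [h0 s hs.1 hs.2, zero_mul]] at h
  exact ⟨g⁻¹ k k, g⁻¹ p k, by linear_combination h⟩

variable [N.Normal]

theorem inv_mul_mul_mem_iff : t⁻¹ * g * t ∈ N ↔ g ∈ N := by
  rw [mul_assoc, Subgroup.Normal.mem_comm_iff ‹_›, mul_inv_cancel_right]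

theorem inv_mul_mul_mem_inf (ht : t ∈ supportedSubgroup R S)
    (hg : g ∈ principalCongruenceSubgroup ι I ⊓ supportedSubgroup R S) :
    t⁻¹ * g * t ∈ principalCongruenceSubgroup ι I ⊓ supportedSubgroup R S :=
  ⟨inv_mul_mul_mem_iff.2 hg.1,
    Subgroup.mul_mem _ (Subgroup.mul_mem _ (Subgroup.inv_mem _ ht) hg.2) ht⟩

theorem mem_of_isCoprime_coe_apply (hN : elementarySubgroup ι I ≤ N) (hk : k ∈ S) (hp : p ∈ S)
    (hq : q ∈ S) (hqk : q ≠ k) (hpq : p ≠ q)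
    (hNS : principalCongruenceSubgroup ι I ⊓ supportedSubgroup R (S.erase k) ≤ N)
    (hg : g ∈ principalCongruenceSubgroup ι I ⊓ supportedSubgroup R S)
    (hcop : IsCoprime (g k k) (g k p)) : g ∈ N := by
  obtain ⟨u, v, huv⟩ := hcop
  -- The entries `(k, k)` and `(k, q)` get sum `1`; conjugation then moves this sum to `(k, k)`.
  let y := 1 - g k k - g k q
  have hy : y ∈ I := by
    have := mem_principalCongruenceSubgroup.1 hg.1
    simpa [y, hqk.symm, sub_eq_add_neg, add_comm, add_assoc] using
      I.sub_mem (I.neg_mem (this k k)) (this k q)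
  have hku : y * u ∈ I := I.mul_mem_right u hy
  have hpv : y * v ∈ I := I.mul_mem_right v hy
  rw [← N.mul_mem_cancel_right (hN (transvection_mem_elementarySubgroup hqk.symm hku)),
    ← N.mul_mem_cancel_right (hN (transvection_mem_elementarySubgroup hpq hpv)),
    ← inv_mul_mul_mem_iff (t := T hqk 1)]
  refine mem_of_coe_apply_self_eq_one hN hk hNS ?_ ?_
  · refine inv_mul_mul_mem_inf (transvection_mem_supportedSubgroup hqk hq hk 1)
      (mul_mem (mul_mem hg ⟨?_, ?_⟩) ⟨?_, ?_⟩)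
    exacts [transvection_mem_principalCongruenceSubgroup hqk.symm hku,
      transvection_mem_supportedSubgroup hqk.symm hk hq _,
      transvection_mem_principalCongruenceSubgroup hpq hpv,
      transvection_mem_supportedSubgroup hpq hp hq _]
  · simp only [transvection_inv, mul_transvection_coe_apply, transvection_mul_coe_apply,
      hqk.symm, hpq, if_true, if_false]
    linear_combination y * huv

end CommRing

variable {ι : Type*} [Fintype ι] [DecidableEq ι] {I : Ideal ℤ} {S : Finset ι}
  {N : Subgroup (SL ι ℤ)} [N.Normal] {k p q : ι}

theorem inf_supportedSubgroup_le_of_erase (hN : elementarySubgroup ι I ≤ N) (hk : k ∈ S)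
    (hcard : 1 < (S.erase k).card)
    (hNS : principalCongruenceSubgroup ι I ⊓ supportedSubgroup ℤ (S.erase k) ≤ N) :
    principalCongruenceSubgroup ι I ⊓ supportedSubgroup ℤ S ≤ N := by
  intro g hg
  induction hn : ∑ s ∈ S.erase k, (g k s).natAbs using Nat.strong_induction_on generalizing g with
  | _ n ih =>
  subst hn
  obtain ⟨i, hi, j, hj, hij, hi₀, hle⟩ | ⟨p, hp, h0⟩ :=
    exists_natAbs_le_or_exists_eq_zero (Finset.card_pos.1 (pos_of_gt hcard)) (g k)
  · obtain ⟨c, hc⟩ := exists_natAbs_add_mul_lt hi₀ hle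
    obtain ⟨hik, hiS⟩ := Finset.mem_erase.1 hi
    have hjS := Finset.mem_of_mem_erase hj
    have hrow (s : ι) :
        ((T hij c)⁻¹ * g * T hij c) k s = g k s + if s = j then g k i * c else 0 := by
      simp [transvection_inv, mul_transvection_coe_apply, transvection_mul_coe_apply, hik.symm]
    refine inv_mul_mul_mem_iff.1 (ih _ ?_ (inv_mul_mul_mem_inf
      (transvection_mem_supportedSubgroup hij hiS hjS c) hg) rfl)
    simp only [hrow]
    refine Finset.sum_lt_sum (fun s _ ↦ ?_) ⟨j, hj, by simpa using hc⟩
    split_ifs with hsj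
    · exact hsj ▸ hc.le
    · simp
  · obtain ⟨q, hq, hqp⟩ := Finset.exists_mem_ne hcard p
    obtain ⟨hpk, hpS⟩ := Finset.mem_erase.1 hp
    obtain ⟨hqk, hqS⟩ := Finset.mem_erase.1 hq
    refine mem_of_isCoprime_coe_apply hN hk hpS hqS hqk hqp.symm hNS hg
      (isCoprime_coe_apply_of_row_eq_zero hpk fun s hsk hsp ↦ ?_)
    by_cases hsS : s ∈ S
    · exact h0 s (Finset.mem_erase.2 ⟨hsk, hsS⟩) hsp
    · rw [mem_supportedSubgroup.1 hg.2 k s (.inr hsS), one_apply_ne' hsk]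

theorem principalCongruenceSubgroup_le_of_pair (hN : elementarySubgroup ι I ≤ N) (hpq : p ≠ q)
    (hpair : principalCongruenceSubgroup ι I ⊓ supportedSubgroup ℤ {p, q} ≤ N) :
    principalCongruenceSubgroup ι I ≤ N := by
  suffices ∀ S : Finset ι, {p, q} ⊆ S →
      principalCongruenceSubgroup ι I ⊓ supportedSubgroup ℤ S ≤ N by
    simpa [supportedSubgroup_univ] using this Finset.univ (Finset.subset_univ _)
  intro S
  induction S using Finset.strongInduction with
  | H S ih =>
  intro hS
  obtain rfl | hS := hS.eq_or_ssubset
  · exact hpair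
  obtain ⟨k, hk, hk'⟩ := Finset.exists_of_ssubset hS
  have hS' : {p, q} ⊆ S.erase k := Finset.subset_erase.2 ⟨hS.subset, hk'⟩
  refine inf_supportedSubgroup_le_of_erase hN hk ?_ (ih _ (Finset.erase_ssubset hk) hS')
  exact (Finset.card_pair hpq).symm.trans_le (Finset.card_le_card hS')

end Reduction

section Generation

variable {ι : Type*} [Fintype ι] [DecidableEq ι] {l : ℤ} {N : Subgroup (SL ι ℤ)} [N.Normal]

theorem inf_supportedSubgroup_zero_one_le_ker {Q : Type*} [Group Q] {F : SL (Fin 3) ℤ →* Q}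
    (hF : elementarySubgroup (Fin 3) (Ideal.span {l}) ≤ F.ker) (hl : l ≠ 0) :
    principalCongruenceSubgroup (Fin 3) (Ideal.span {l}) ⊓ supportedSubgroup ℤ {0, 1} ≤ F.ker := by
  rintro g ⟨hgl, hg⟩
  rw [show ({0, 1} : Finset (Fin 3)) = Finset.univ.map (Function.Embedding.inl.trans
    (finSumFinEquiv : Fin 2 ⊕ Fin 1 ≃ Fin 3).toEmbedding) by decide] at hg
  obtain ⟨M, -, rfl⟩ := exists_blockEmbedding_eq _ hg
  exact map_cornerEmbedding_eq_one hF hl ((blockEmbedding_mem_principalCongruenceSubgroup _).1 hgl)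

theorem principalCongruenceSubgroup_le_of_elementarySubgroup_le (hι : 3 ≤ Fintype.card ι)
    (hl : l ≠ 0) (hN : elementarySubgroup ι (Ideal.span {l}) ≤ N) :
    principalCongruenceSubgroup ι (Ideal.span {l}) ≤ N := by
  let e : Fin 3 ⊕ Fin (Fintype.card ι - 3) ≃ ι := Fintype.equivOfCardEq (by simp; omega)
  let f : Fin 3 ↪ ι := Function.Embedding.inl.trans e.toEmbedding
  let F := (QuotientGroup.mk' N).comp (blockEmbedding ℤ e)
  have hker : F.ker = N.comap (blockEmbedding ℤ e) := by
    rw [← MonoidHom.comap_ker, QuotientGroup.ker_mk']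
  have hF : elementarySubgroup (Fin 3) (Ideal.span {l}) ≤ F.ker := by
    rw [hker, elementarySubgroup, Subgroup.closure_le]
    rintro _ ⟨i, j, hij, c, hc, rfl⟩
    rw [SetLike.mem_coe, Subgroup.mem_comap, blockEmbedding_transvection]
    exact hN (transvection_mem_elementarySubgroup _ hc)
  refine principalCongruenceSubgroup_le_of_pair hN (f.injective.ne zero_ne_one) ?_
  rintro g ⟨hgl, hg⟩
  rw [← Finset.map_singleton, ← Finset.map_insert] at hg
  obtain ⟨M, hM, rfl⟩ := exists_blockEmbedding_eq e hg
  rw [← Subgroup.mem_comap, ← hker]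
  exact inf_supportedSubgroup_zero_one_le_ker hF hl
    ⟨(blockEmbedding_mem_principalCongruenceSubgroup e).1 hgl, hM⟩

end Generation

theorem congruenceSubgroup_eq_normalClosure_pow_elementary_general {ι : Type*} [Fintype ι]
    [DecidableEq ι] (hι : 3 ≤ Fintype.card ι) {i j : ι} (hij : i ≠ j) {l : ℤ} (hl : l ≠ 0) :
    principalCongruenceSubgroup ι (Ideal.span {l}) = Subgroup.normalClosure {T hij l} := by
  refine le_antisymm (principalCongruenceSubgroup_le_of_elementarySubgroup_le hι hl
    (elementarySubgroup_span_singleton_le hι (hij := hij)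
      (Subgroup.subset_normalClosure rfl))) (Subgroup.normalClosure_le_normal ?_)
  rw [Set.singleton_subset_iff]
  exact transvection_mem_principalCongruenceSubgroup hij (Ideal.mem_span_singleton_self l)

/-- **Mennicke / Bass–Lazard–Serre.**  For `n ≥ 3` and `ℓ ≥ 1`, the principal congruence
subgroup `Γ_n(ℓ) = ker (SL_n(ℤ) → SL_n(ℤ/ℓℤ))` is the smallest normal subgroup of
`SL_n(ℤ)` containing `E^ℓ`, i.e. the normal closure of `{E^ℓ}`. -/
theorem congruenceSubgroup_eq_normalClosure_pow_elementary (n ℓ : ℕ) (hℓ : 1 ≤ ℓ) :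
    (Matrix.SpecialLinearGroup.map (n := Fin (n + 3))
        (Int.castRingHom (ZMod ℓ))).ker =
      Subgroup.normalClosure {Emat n ℤ ^ ℓ} := by
  have hE : Emat n ℤ ^ ℓ = T zero_ne_one (ℓ : ℤ) :=
    (transvection_pow zero_ne_one 1 ℓ).trans (by rw [mul_one])
  rw [ker_map_eq_principalCongruenceSubgroup, ZMod.ker_intCastRingHom, hE,
    congruenceSubgroup_eq_normalClosure_pow_elementary_general (by simp) _ (by omega)]
end

section
/- Let p be prime, k ≥ 1, n ≥ 3, and let ρ : SL_n(ℤ/p^kℤ) → GL(V) be a finite-dimensional complex representation. If the element ρ(E_{1,2})^{p^{k-1}} acts trivially (equivalently, every eigenvalue of ρ(E_{1,2}) has order dividing p^{k-1}), then ρ factors through the reduction map SL_n(ℤ/p^kℤ) → SL_n(ℤ/p^{k-1}ℤ). -/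
open Matrix

/-!
Write `T_{ij}(a) = 1 + a e_{ij}`. Let `f : R → S` be a ring homomorphism with `R` semilocal (that
is, with finite maximal spectrum), and `K` a subgroup of `SL(R)` that contains every `T_{ij}(a)`
with `f a = 0` and is normalized by all `T_{ij}(a)`. A matrix congruent to `1` modulo `ker f` lies
in `K`, by clearing one column at a time: since semilocal rings have stable range one, conjugating
by transvections makes the pivot a unit; a transvection from `K` followed by one more conjugation
makes the pivot equal to `1`; the rest of the column then consists of elements of `ker f`, which
transvections from `K` remove.

For `S = 0` this says that transvections generate `SL(R)`, hence that surjections onto semilocal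
rings induce surjections on `SL`. When `ker f` is generated by `q` and the size is at least `3`,
the commutator formula `[T_{ij}(a), T_{jl}(b)] = T_{il}(ab)` produces all `T_{kl}(qx)` from a single
`T_{ij}(q)` inside a normal subgroup, so the kernel of `SL(R) → SL(S)` is the normal closure of
`T_{ij}(q)`.
-/

section Semilocal

variable {R : Type*} [CommRing R]

theorem exists_isUnit_add_mul_of_isCoprime [Finite (MaximalSpectrum R)] {a b : R}
    (hab : IsCoprime a b) : ∃ t, IsUnit (a + t * b) := by
  classical
  have hpair : Pairwise (Function.onFun IsCoprime (MaximalSpectrum.asIdeal (R := R))) :=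
    fun _ _ hne ↦ Ideal.isCoprime_of_isMaximal (MaximalSpectrum.ext_iff.ne.mp hne)
  obtain ⟨t, ht⟩ := Ideal.exists_forall_sub_mem_ideal hpair
    (fun m ↦ if a ∈ m.asIdeal then 1 else 0)
  refine ⟨t, not_not.mp fun hunit ↦ ?_⟩
  obtain ⟨I, hI, hmem⟩ := exists_max_ideal_of_mem_nonunits hunit
  have htI := ht ⟨I, hI⟩
  by_cases haI : a ∈ I
  · rw [if_pos haI] at htI
    have hbI : b ∈ I := by
      have : b = (a + t * b) - a - (t - 1) * b := by ring
      rw [this]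
      exact I.sub_mem (I.sub_mem hmem haI) (I.mul_mem_right b htI)
    obtain ⟨x, y, hxy⟩ := hab
    exact hI.ne_top ((Ideal.eq_top_iff_one I).mpr
      (hxy ▸ I.add_mem (I.mul_mem_left x haI) (I.mul_mem_left y hbI)))
  · rw [if_neg haI, sub_zero] at htI
    exact haI ((Ideal.add_mem_iff_left I (I.mul_mem_right b htI)).mp hmem)

theorem finite_maximalSpectrum_of_surjective {S : Type*} [CommRing S] [Finite (MaximalSpectrum R)]
    {f : R →+* S} (hf : Function.Surjective f) : Finite (MaximalSpectrum S) := by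
  let comapMax (m : MaximalSpectrum S) : MaximalSpectrum R :=
    have := m.isMaximal
    ⟨m.asIdeal.comap f, Ideal.comap_isMaximal_of_surjective f hf⟩
  exact Finite.of_injective comapMax fun m m' h ↦ MaximalSpectrum.ext
    (Ideal.comap_injective_of_surjective f hf (congrArg MaximalSpectrum.asIdeal h))

end Semilocal

namespace RelativeElementary

open Matrix.SpecialLinearGroup
open scoped commutatorElement

variable {ι R S : Type*} [Fintype ι] [DecidableEq ι] [CommRing R] [CommRing S]

theorem smul_single_apply (M : SpecialLinearGroup ι R) (i j : ι) :
    (M • (Pi.single j 1 : ι → R)) i = M i j := by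
  change (M.1 *ᵥ Pi.single j 1) i = M i j
  simp

theorem transvection_smul_single {i j l : ι} (hij : i ≠ j) (hl : l ≠ j) (a : R) :
    transvection hij a • (Pi.single l 1 : ι → R) = Pi.single l 1 := by
  ext k
  simp [smul_single_apply, transvection_coe, one_apply, Pi.single_apply, hl.symm]

theorem mul_transvection_inv_apply {i j l : ι} (hij : i ≠ j) (hl : l ≠ j) (a : R)
    (M : SpecialLinearGroup ι R) (k : ι) : (M * (transvection hij a)⁻¹) k l = M k l := by
  rw [← smul_single_apply, ← smul_single_apply, mul_smul, transvection_inv,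
    transvection_smul_single hij hl]

theorem mem_ker_map_iff {f : R →+* S} {M : SpecialLinearGroup ι R} :
    M ∈ (SpecialLinearGroup.map (n := ι) f).ker ↔ ∀ i j, f (M i j) = (1 : Matrix ι ι S) i j := by
  rw [MonoidHom.mem_ker, Matrix.SpecialLinearGroup.ext_iff]
  rfl

theorem map_transvection (f : R →+* S) {i j : ι} (hij : i ≠ j) (a : R) :
    SpecialLinearGroup.map f (transvection hij a) = transvection hij (f a) := by
  ext k l
  simp [transvection_coe, one_apply, single_apply, apply_ite f]

theorem transvection_mem_ker_map {f : R →+* S} {i j : ι} (hij : i ≠ j) {a : R} (ha : f a = 0) :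
    transvection hij a ∈ (SpecialLinearGroup.map (n := ι) f).ker := by
  rw [MonoidHom.mem_ker, map_transvection, ha, transvection_coeff_zero]

/-- The matrices whose columns indexed by `s` are those of the identity, encoded as the pointwise
stabilizer of the basis vectors `e_l` for `l ∈ s`: the stages of the column-by-column reduction
are these groups for growing `s`. -/
def basisFixingSubgroup (ι R : Type*) [Fintype ι] [DecidableEq ι] [CommRing R] (s : Set ι) :
    Subgroup (SpecialLinearGroup ι R) :=
  fixingSubgroup _ ((fun l ↦ Pi.single l (1 : R)) '' s)

theorem mem_basisFixingSubgroup_iff {s : Set ι} {M : SpecialLinearGroup ι R} :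
    M ∈ basisFixingSubgroup ι R s ↔ ∀ l ∈ s, M • (Pi.single l 1 : ι → R) = Pi.single l 1 := by
  simp [basisFixingSubgroup, mem_fixingSubgroup_iff]

theorem basisFixingSubgroup_univ : basisFixingSubgroup ι R Set.univ = ⊥ := by
  refine (Subgroup.eq_bot_iff_forall _).mpr fun M hM ↦ ?_
  ext i j
  rw [← smul_single_apply, mem_basisFixingSubgroup_iff.mp hM j (Set.mem_univ j),
    ← smul_single_apply, one_smul]

theorem transvection_mem_basisFixingSubgroup {s : Set ι} {i j : ι} (hij : i ≠ j)
    (hj : j ∉ s) (a : R) : transvection hij a ∈ basisFixingSubgroup ι R s :=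
  mem_basisFixingSubgroup_iff.mpr fun _ hl ↦
    transvection_smul_single hij (ne_of_mem_of_not_mem hl hj) a

theorem exists_mem_coe_eq_one_add {H : Subgroup (SpecialLinearGroup ι R)} {X : Matrix ι ι R}
    {A : Set ι} (hX : ∀ i j, i ∉ A ∨ j ∈ A → X i j = 0)
    (hH : ∀ i j (hij : i ≠ j), i ∈ A → j ∉ A → transvection hij (X i j) ∈ H) :
    ∃ g ∈ H, (g : Matrix ι ι R) = 1 + X := by
  classical
  let P : AddSubmonoid (Matrix ι ι R) :=
    { carrier := {Y | (∀ i j, i ∉ A ∨ j ∈ A → Y i j = 0) ∧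
        ∃ g ∈ H, (g : Matrix ι ι R) = 1 + Y}
      zero_mem' := ⟨fun _ _ _ ↦ rfl, 1, H.one_mem, by simp⟩
      add_mem' := by
        rintro Y Z ⟨hY, g, hg, hgY⟩ ⟨hZ, k, hk, hkZ⟩
        -- Since `Y * Z = 0`, the map `Y ↦ 1 + Y` turns sums into products.
        have hYZ : Y * Z = 0 := by
          ext i j
          rw [mul_apply]
          refine Finset.sum_eq_zero fun l _ ↦ ?_
          by_cases hl : l ∈ A
          · rw [hY i l (.inr hl), zero_mul]
          · rw [hZ l j (.inl hl), mul_zero]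
        refine ⟨fun i j h ↦ by simp [hY i j h, hZ i j h], g * k, H.mul_mem hg hk, ?_⟩
        rw [coe_mul, hgY, hkZ, add_mul, mul_add, mul_add, hYZ]
        simp [add_assoc, add_comm] }
  suffices hP : X ∈ P from hP.2
  rw [matrix_eq_sum_single X]
  refine P.sum_mem fun i _ ↦ P.sum_mem fun j _ ↦ ?_
  by_cases h : i ∈ A ∧ j ∉ A
  · have hij : i ≠ j := ne_of_mem_of_not_mem h.1 h.2
    refine ⟨fun k l hkl ↦ ?_, transvection hij (X i j), hH i j hij h.1 h.2, transvection_coe hij _⟩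
    rw [single_apply, if_neg]
    rintro ⟨rfl, rfl⟩
    tauto
  · rw [hX i j (by tauto), single_zero]
    exact P.zero_mem

theorem exists_mem_mul_mem_basisFixingSubgroup_insert {f : R →+* S}
    {K : Subgroup (SpecialLinearGroup ι R)}
    (hK : ∀ (i j : ι) (hij : i ≠ j) (a : R), f a = 0 → transvection hij a ∈ K)
    {M : SpecialLinearGroup ι R} (hM : M ∈ (SpecialLinearGroup.map f).ker)
    {s : Set ι} (hMs : M ∈ basisFixingSubgroup ι R s) {j : ι} (hj : j ∉ s) (hpivot : M j j = 1) :
    ∃ g ∈ K, g * M ∈ basisFixingSubgroup ι R (insert j s) := by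
  let X : Matrix ι ι R := of fun k l ↦ if l = j ∧ k ≠ j then - M k j else 0
  obtain ⟨g, ⟨hg, hgs⟩, hgX⟩ := exists_mem_coe_eq_one_add
    (H := K ⊓ basisFixingSubgroup ι R s) (X := X) (A := {j}ᶜ)
    (fun k l hkl ↦ if_neg (by grind)) (by
      rintro k l hkl - hl
      obtain rfl : l = j := by simpa using hl
      refine ⟨hK k l hkl _ ?_, transvection_mem_basisFixingSubgroup hkl hj _⟩
      simpa [X, hkl] using mem_ker_map_iff.mp hM k l)
  refine ⟨g, hg, mem_basisFixingSubgroup_iff.mpr ?_⟩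
  rintro l (rfl | hl)
  · ext k
    rw [smul_single_apply, coe_mul, hgX, add_mul, one_mul, Matrix.add_apply, mul_apply]
    rw [Finset.sum_eq_single l (by simp +contextual [X]) (by simp)]
    by_cases hk : k = l
    · simp [X, hk, hpivot]
    · simp [X, hk, hpivot]
  · exact mem_basisFixingSubgroup_iff.mp (mul_mem hgs hMs) l hl

theorem exists_conj_transvection_mul_apply_eq_one (f : R →+* S) {M : SpecialLinearGroup ι R}
    (hM : M ∈ (SpecialLinearGroup.map f).ker) {i j : ι} (hij : i ≠ j) (hunit : IsUnit (M i i)) :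
    ∃ b, f b = 0 ∧
      ((transvection hij 1 * (transvection hij.symm b * M) * (transvection hij 1)⁻¹ :
        SpecialLinearGroup ι R) : Matrix ι ι R) i i = 1 := by
  obtain ⟨u, hu⟩ := hunit.exists_left_inv
  refine ⟨(1 - M i i - M j i) * u, ?_, ?_⟩
  · have := mem_ker_map_iff.mp hM
    simp [this, hij.symm]
  · rw [mul_transvection_inv_apply hij hij]
    simp only [coe_mul, transvection_coe, add_mul, one_mul, Matrix.add_apply, ne_eq, hij,
      not_false_eq_true, single_mul_apply_of_ne, add_zero, single_mul_apply_same]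
    linear_combination (1 - M i i - M j i) * hu

theorem apply_self_eq_one_of_mem_basisFixingSubgroup_compl {M : SpecialLinearGroup ι R} {j : ι}
    (hM : M ∈ basisFixingSubgroup ι R {j}ᶜ) : M j j = 1 := by
  have hcol : M.1 = (1 : Matrix ι ι R).updateCol j (fun i ↦ M i j) := by
    ext i l
    by_cases hl : l = j
    · simp [hl]
    · have := congrFun (mem_basisFixingSubgroup_iff.mp hM l hl) i
      rw [smul_single_apply] at this
      simp [hl, this, one_apply, Pi.single_apply]
  have hdet := M.det_coe
  rw [hcol, ← cramer_apply, cramer_one] at hdet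
  simpa using hdet

theorem exists_conj_mul_apply_self_eq_one {f : R →+* S} {K H : Subgroup (SpecialLinearGroup ι R)}
    (hK : ∀ (i j : ι) (hij : i ≠ j) (a : R), f a = 0 → transvection hij a ∈ K)
    (hH : ∀ (i j : ι) (hij : i ≠ j) (a : R), transvection hij a ∈ H)
    {M : SpecialLinearGroup ι R} (hM : M ∈ (SpecialLinearGroup.map f).ker)
    {s : Set ι} (hMs : M ∈ basisFixingSubgroup ι R s) {j : ι} (hj : j ∉ s)
    (hunit : IsUnit (M j j)) :
    ∃ g ∈ H ⊓ basisFixingSubgroup ι R s, ∃ k ∈ K ⊓ basisFixingSubgroup ι R s,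
      (g * (k * M) * g⁻¹) j j = 1 := by
  by_cases h : ∃ i ∉ s, j ≠ i
  · obtain ⟨i, hi, hji⟩ := h
    obtain ⟨b, hb, hpivot⟩ := exists_conj_transvection_mul_apply_eq_one f hM hji hunit
    exact ⟨_, ⟨hH j i hji 1, transvection_mem_basisFixingSubgroup hji hi 1⟩,
      _, ⟨hK i j hji.symm b hb, transvection_mem_basisFixingSubgroup hji.symm hj b⟩, hpivot⟩
  · have hs : s = {j}ᶜ := by grind
    refine ⟨1, one_mem _, 1, one_mem _, ?_⟩
    simpa using apply_self_eq_one_of_mem_basisFixingSubgroup_compl (hs ▸ hMs)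

theorem exists_isUnit_apply_self_add_mul_sum [Finite (MaximalSpectrum R)]
    (M : SpecialLinearGroup ι R) (j : ι) :
    ∃ t, IsUnit (M j j + t * ∑ l ∈ Finset.univ.erase j, M⁻¹ j l * M l j) := by
  have hunimodular : ∑ l, M⁻¹ j l * M l j = 1 := by
    have := congrArg (fun N : SpecialLinearGroup ι R ↦ N j j) (inv_mul_cancel M)
    simpa only [coe_mul, mul_apply, coe_one, one_apply_eq] using this
  rw [← Finset.add_sum_erase _ _ (Finset.mem_univ j)] at hunimodular
  exact exists_isUnit_add_mul_of_isCoprime ⟨M⁻¹ j j, 1, by rwa [one_mul]⟩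

theorem exists_isUnit_conj_apply_self [Finite (MaximalSpectrum R)]
    {H : Subgroup (SpecialLinearGroup ι R)}
    (hH : ∀ (i j : ι) (hij : i ≠ j) (a : R), transvection hij a ∈ H)
    {s : Set ι} {M : SpecialLinearGroup ι R} (hM : M ∈ basisFixingSubgroup ι R s)
    {j : ι} (hj : j ∉ s) :
    ∃ g ∈ H ⊓ basisFixingSubgroup ι R s, IsUnit ((g * M * g⁻¹) j j) := by
  classical
  have hinv (l : ι) (hl : l ∈ s) : M⁻¹ j l = 0 := by
    rw [← smul_single_apply, mem_basisFixingSubgroup_iff.mp (inv_mem hM) l hl]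
    exact Pi.single_eq_of_ne (ne_of_mem_of_not_mem hl hj).symm _
  obtain ⟨t, ht⟩ := exists_isUnit_apply_self_add_mul_sum M j
  let X : Matrix ι ι R := of fun k l ↦ if k = j ∧ l ≠ j then t * M⁻¹ j l else 0
  obtain ⟨g, ⟨hg, hgs⟩, hgX⟩ := exists_mem_coe_eq_one_add
    (H := H ⊓ basisFixingSubgroup ι R (insert j s)) (X := X) (A := {j})
    (fun k l hkl ↦ if_neg (by grind)) (by
      rintro k l hkl hk -
      obtain rfl : k = j := hk
      refine ⟨hH _ _ _ _, ?_⟩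
      by_cases hls : l ∈ s
      · have hX : X k l = 0 := by simp only [X, of_apply, hinv l hls, mul_zero, ite_self]
        rw [hX, transvection_coeff_zero]
        exact one_mem _
      · exact transvection_mem_basisFixingSubgroup hkl (by simp [hkl.symm, hls]) _)
  -- As `g⁻¹` fixes `e_j`, the pivots of `g * M * g⁻¹` and `g * M` agree.
  have hgj := mem_basisFixingSubgroup_iff.mp (inv_mem hgs) j (s.mem_insert j)
  refine ⟨g, ⟨hg, mem_basisFixingSubgroup_iff.mpr fun l hl ↦
    mem_basisFixingSubgroup_iff.mp hgs l (.inr hl)⟩, ?_⟩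
  rw [← smul_single_apply, mul_smul, hgj, smul_single_apply, coe_mul, hgX, add_mul, one_mul,
    Matrix.add_apply, mul_apply]
  convert ht using 2
  rw [← Finset.add_sum_erase _ _ (Finset.mem_univ j), Finset.mul_sum]
  simp only [X, of_apply, ne_eq, not_true_eq_false, and_false, if_false, zero_mul, zero_add,
    true_and]
  refine Finset.sum_congr rfl fun l hl ↦ ?_
  rw [if_pos (Finset.ne_of_mem_erase hl), mul_assoc]

theorem mem_of_mem_basisFixingSubgroup [Finite (MaximalSpectrum R)] {f : R →+* S}
    {K : Subgroup (SpecialLinearGroup ι R)}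
    (hK : ∀ (i j : ι) (hij : i ≠ j) (a : R), f a = 0 → transvection hij a ∈ K)
    (hnorm : ∀ (i j : ι) (hij : i ≠ j) (a : R),
      transvection hij a ∈ Subgroup.normalizer (K : Set (SpecialLinearGroup ι R)))
    (s : Finset ι) {M : SpecialLinearGroup ι R} (hM : M ∈ (SpecialLinearGroup.map f).ker)
    (hMs : M ∈ basisFixingSubgroup ι R (s : Set ι)ᶜ) : M ∈ K := by
  induction s using Finset.induction_on generalizing M with
  | empty =>
    rw [Finset.coe_empty, Set.compl_empty, basisFixingSubgroup_univ, Subgroup.mem_bot] at hMs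
    exact hMs ▸ K.one_mem
  | insert j s hj ih =>
    have hjs : j ∉ ((insert j s : Finset ι) : Set ι)ᶜ := by simp
    set Γ := (SpecialLinearGroup.map (n := ι) f).ker
    set F := basisFixingSubgroup ι R ((insert j s : Finset ι) : Set ι)ᶜ
    have hKΓ (i j : ι) (hij : i ≠ j) (a : R) (ha : f a = 0) : transvection hij a ∈ K ⊓ Γ :=
      ⟨hK i j hij a ha, transvection_mem_ker_map hij ha⟩
    have conj_mem_Γ {M} (hM : M ∈ Γ) (g) : g * M * g⁻¹ ∈ Γ :=
      (SpecialLinearGroup.map f).normal_ker.conj_mem M hM g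
    have pivot_one {M} (hM : M ∈ Γ) (hMs : M ∈ F) (hpivot : M j j = 1) : M ∈ K := by
      obtain ⟨g, ⟨hgK, hgΓ⟩, hgM⟩ :=
        exists_mem_mul_mem_basisFixingSubgroup_insert hKΓ hM hMs hjs hpivot
      refine (K.mul_mem_cancel_left hgK).mp (ih (mul_mem hgΓ hM) ?_)
      have hset : (s : Set ι)ᶜ = insert j ((insert j s : Finset ι) : Set ι)ᶜ := by grind
      rwa [hset]
    have pivot_unit {M} (hM : M ∈ Γ) (hMs : M ∈ F) (hunit : IsUnit (M j j)) : M ∈ K := by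
      obtain ⟨g, ⟨hg, hgF⟩, k, ⟨⟨hkK, hkΓ⟩, hkF⟩, hpivot⟩ :=
        exists_conj_mul_apply_self_eq_one hKΓ hnorm hM hMs hjs hunit
      exact (K.mul_mem_cancel_left hkK).mp ((Subgroup.mem_normalizer_iff.mp hg _).mpr
        (pivot_one (conj_mem_Γ (mul_mem hkΓ hM) g)
          (mul_mem (mul_mem hgF (mul_mem hkF hMs)) (inv_mem hgF)) hpivot))
    obtain ⟨g, ⟨hg, hgF⟩, hunit⟩ := exists_isUnit_conj_apply_self hnorm hMs hjs
    exact (Subgroup.mem_normalizer_iff.mp hg M).mpr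
      (pivot_unit (conj_mem_Γ hM g) (mul_mem (mul_mem hgF hMs) (inv_mem hgF)) hunit)

theorem ker_map_le_of_transvection_mem [Finite (MaximalSpectrum R)] {f : R →+* S}
    {K : Subgroup (SpecialLinearGroup ι R)}
    (hK : ∀ (i j : ι) (hij : i ≠ j) (a : R), f a = 0 → transvection hij a ∈ K)
    (hnorm : ∀ (i j : ι) (hij : i ≠ j) (a : R),
      transvection hij a ∈ Subgroup.normalizer (K : Set (SpecialLinearGroup ι R))) :
    (SpecialLinearGroup.map f).ker ≤ K :=
  fun _ hM ↦ mem_of_mem_basisFixingSubgroup hK hnorm Finset.univ hM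
    (mem_basisFixingSubgroup_iff.mpr (by simp))

theorem eq_top_of_transvection_mem [Finite (MaximalSpectrum R)]
    {K : Subgroup (SpecialLinearGroup ι R)}
    (hK : ∀ (i j : ι) (hij : i ≠ j) (a : R), transvection hij a ∈ K) : K = ⊤ := by
  let f : R →+* R ⧸ (⊤ : Ideal R) := Ideal.Quotient.mk ⊤
  have hker := ker_map_le_of_transvection_mem (f := f) (fun i j hij a _ ↦ hK i j hij a)
    (fun i j hij a ↦ Subgroup.le_normalizer (hK i j hij a))
  exact eq_top_iff.mpr fun M _ ↦ hker (mem_ker_map_iff.mpr fun i j ↦ Subsingleton.elim _ _)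

theorem map_surjective [Finite (MaximalSpectrum S)] {f : R →+* S} (hf : Function.Surjective f) :
    Function.Surjective (SpecialLinearGroup.map (n := ι) f) := by
  refine MonoidHom.range_eq_top.mp (eq_top_of_transvection_mem fun i j hij a ↦ ?_)
  obtain ⟨b, rfl⟩ := hf a
  exact ⟨transvection hij b, map_transvection f hij b⟩

theorem commutatorElement_transvection {i j l : ι} (hij : i ≠ j) (hjl : j ≠ l) (hil : i ≠ l)
    (a b : R) : ⁅transvection hij a, transvection hjl b⁆ = transvection hil (a * b) := by
  rw [commutatorElement_def, transvection_inv, transvection_inv]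
  apply coeMonoidHom_injective
  simp only [map_mul, coeMonoidHom_apply, transvection_coe]
  simp only [mul_add, mul_one, add_mul, one_mul, single_mul_single_same, ← single_neg, mul_neg,
    ne_eq, hij.symm, not_false_eq_true, single_mul_single_of_ne, add_zero, hil.symm, hjl.symm,
    neg_mul, add_neg_cancel_right]
  abel

theorem transvection_mul_right_mem {N : Subgroup (SpecialLinearGroup ι R)} [N.Normal]
    {i j l : ι} {hij : i ≠ j} {a : R} (ha : transvection hij a ∈ N)
    (hjl : j ≠ l) (hil : i ≠ l) (x : R) : transvection hil (a * x) ∈ N := by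
  rw [← commutatorElement_transvection hij hjl hil]
  exact Subgroup.commutator_le_left N ⊤
    (Subgroup.commutator_mem_commutator ha (Subgroup.mem_top _))

theorem transvection_mul_left_mem {N : Subgroup (SpecialLinearGroup ι R)} [N.Normal]
    {i j l : ι} {hjl : j ≠ l} {a : R} (ha : transvection hjl a ∈ N)
    (hij : i ≠ j) (hil : i ≠ l) (x : R) : transvection hil (x * a) ∈ N := by
  rw [← commutatorElement_transvection hij hjl hil]
  exact Subgroup.commutator_le_right ⊤ N
    (Subgroup.commutator_mem_commutator (Subgroup.mem_top _) ha)

theorem transvection_mul_mem_of_transvection_mem (hι : 3 ≤ ENat.card ι)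
    {N : Subgroup (SpecialLinearGroup ι R)} [N.Normal] {i j : ι} {hij : i ≠ j} {q : R}
    (hq : transvection hij q ∈ N) {k l : ι} (hkl : k ≠ l) (x : R) :
    transvection hkl (q * x) ∈ N := by
  have hrow {l : ι} (hil : i ≠ l) (x : R) : transvection hil (q * x) ∈ N := by
    obtain rfl | hlj := eq_or_ne l j
    · obtain ⟨m, hmi, hml⟩ := ENat.exists_ne_ne_of_three_le hι i l
      have := transvection_mul_right_mem hq hml.symm hmi.symm x
      simpa using transvection_mul_right_mem this hml hil 1
    · exact transvection_mul_right_mem hq hlj.symm hil x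
  obtain rfl | hik := eq_or_ne i k
  · exact hrow hkl x
  obtain ⟨m, hmi, hmk⟩ := ENat.exists_ne_ne_of_three_le hι i k
  have hkm : transvection hmk.symm (q * x) ∈ N := by
    simpa using transvection_mul_left_mem (hrow hmi.symm x) hik.symm hmk.symm 1
  obtain rfl | hlm := eq_or_ne l m
  · exact hkm
  · simpa using transvection_mul_right_mem hkm hlm.symm hkl 1

theorem exists_eq_comp_map_of_transvection_mem_ker {G : Type*} [Group G]
    [Finite (MaximalSpectrum R)] (hι : 3 ≤ ENat.card ι)
    {f : R →+* S} (hf : Function.Surjective f) {q : R} (hq : RingHom.ker f = Ideal.span {q})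
    {ρ : SpecialLinearGroup ι R →* G} {i j : ι} {hij : i ≠ j}
    (h : transvection hij q ∈ ρ.ker) :
    ∃ ρ' : SpecialLinearGroup ι S →* G, ρ = ρ'.comp (SpecialLinearGroup.map f) := by
  have : Finite (MaximalSpectrum S) := finite_maximalSpectrum_of_surjective hf
  have hle : (SpecialLinearGroup.map (n := ι) f).ker ≤ ρ.ker := by
    refine ker_map_le_of_transvection_mem (fun k l hkl a ha ↦ ?_) (fun _ _ _ _ ↦ ?_)
    · obtain ⟨x, rfl⟩ := Ideal.mem_span_singleton.mp (hq ▸ (RingHom.mem_ker.mpr ha))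
      exact transvection_mul_mem_of_transvection_mem hι h hkl x
    · simp [Subgroup.normalizer_eq_top]
  exact ⟨MonoidHom.liftOfSurjective _ (map_surjective hf) ⟨ρ, hle⟩,
    (MonoidHom.liftOfRightInverse_comp _ _ _ ⟨ρ, hle⟩).symm⟩

end RelativeElementary

theorem zmod_ker_castHom_eq_span {m d : ℕ} (hd : d ∣ m) :
    RingHom.ker (ZMod.castHom hd (ZMod d)) = Ideal.span {(d : ZMod m)} := by
  ext x
  obtain ⟨z, rfl⟩ := ZMod.intCast_surjective x
  rw [RingHom.mem_ker, map_intCast, ZMod.intCast_zmod_eq_zero_iff_dvd, Ideal.mem_span_singleton]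
  refine ⟨fun h ↦ by simpa using map_dvd (Int.castRingHom (ZMod m)) h, fun h ↦ ?_⟩
  have := map_dvd (ZMod.castHom hd (ZMod d)) h
  simpa [ZMod.intCast_zmod_eq_zero_iff_dvd] using this

theorem emat_pow (n m : ℕ) (R : Type*) [CommRing R] :
    Emat n R ^ m =
      SpecialLinearGroup.transvection (zero_ne_one : (0 : Fin (n + 3)) ≠ 1) (m : R) := by
  induction m with
  | zero => simp
  | succ m ih =>
    rw [pow_succ, ih, Nat.cast_succ, SpecialLinearGroup.transvection_add]
    rfl

theorem factors_through_of_elementary_pow_eq_one_general (n m d : ℕ) [NeZero m] (hd : d ∣ m)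
    {G : Type*} [Group G] (ρ : Matrix.SpecialLinearGroup (Fin (n + 3)) (ZMod m) →* G)
    (h : ρ (Emat n (ZMod m)) ^ d = 1) :
    ∃ ρ' : Matrix.SpecialLinearGroup (Fin (n + 3)) (ZMod d) →* G,
      ρ = ρ'.comp (Matrix.SpecialLinearGroup.map (ZMod.castHom hd (ZMod d))) := by
  refine RelativeElementary.exists_eq_comp_map_of_transvection_mem_ker (by simp)
    (ZMod.castHom_surjective hd) (zmod_ker_castHom_eq_span hd) (hij := zero_ne_one) ?_
  rw [MonoidHom.mem_ker, ← emat_pow, map_pow, h]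

/-- Let `p` be prime, `k ≥ 1`, `n ≥ 3`, and `ρ` a finite-dimensional complex
representation of `SL_n(ℤ/p^kℤ)`.  If `ρ(E_{1,2})^{p^{k-1}} = 1`, then `ρ` factors
through the reduction map `SL_n(ℤ/p^kℤ) → SL_n(ℤ/p^{k-1}ℤ)`. -/
theorem factors_through_of_elementary_pow_eq_one (n p k N : ℕ) (hp : p.Prime) (hk : 1 ≤ k)
    (ρ : Matrix.SpecialLinearGroup (Fin (n + 3)) (ZMod (p ^ k)) →* GL (Fin N) ℂ)
    (h : ρ (Emat n (ZMod (p ^ k))) ^ p ^ (k - 1) = 1) :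
    ∃ ρ' : Matrix.SpecialLinearGroup (Fin (n + 3)) (ZMod (p ^ (k - 1))) →* GL (Fin N) ℂ,
      ρ = ρ'.comp (Matrix.SpecialLinearGroup.map
        (ZMod.castHom (pow_dvd_pow p (Nat.sub_le k 1)) (ZMod (p ^ (k - 1))))) := by
  have : NeZero (p ^ k) := ⟨pow_ne_zero k hp.ne_zero⟩
  exact factors_through_of_elementary_pow_eq_one_general n _ _ (pow_dvd_pow p (Nat.sub_le k 1)) ρ h
end
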